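/- arXiv:2511.19494 — 5 statements merged into one kernel-verified Lean document; each statement's English description precedes it below -/
import Mathlib

section
/- For every integer r ≥ 1 and every real 0 < ε < 1, the finite nilpotent group G = (ℤ/2ℤ)^r, which has rank(G) = r, satisfies φ_k(G) < 1 − ε when k = r + ⌈log₂(2/ε)⌉ − 3 (interpreting φ_k(G) with this value of k, which may be computed in ℤ; if k < 0 or the k-tuples never generate, φ_k(G) = 0). -/
/-- `genProb G k` is the probability that `k` independently and uniformly chosen random
elements of the finite group `G` generate `G`, i.e. the number of `k`-tuples whose generated
subgroup is all of `G`, divided by `|G|^k`. -/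
noncomputable def genProb (G : Type*) [Group G] (k : ℕ) : ℝ :=
  (Nat.card {v : Fin k → G // Subgroup.closure (Set.range v) = ⊤} : ℝ) /
    (Nat.card G : ℝ) ^ k

/-- `genProb` extended to integer values of `k`: it is `0` for negative `k`. -/
noncomputable def genProbZ (G : Type*) [Group G] (k : ℤ) : ℝ :=
  if 0 ≤ k then genProb G k.toNat else 0

/-!
A `k`-tuple in `(ℤ/pℤ)^r` is a `k × r` matrix over `ZMod p`. Subgroups are subspaces here, so the
tuple generates the group exactly when the rows span, i.e. when the `r` columns are linearly
independent in `(ℤ/pℤ)^k`. Choosing the columns one after another gives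
`φ_k = ∏_{i < r} (1 - p^i / p^k)`. For `k ≥ r - 1` the last factor alone bounds `φ_k` by
`1 - p^(r - 1 - k)`, and for `k = r - 1 + d` with `d = ⌈log_p (p / ε)⌉ - 2` the loss `p^(-d)`
exceeds `ε`, because `d < log_p (1 / ε)`.
-/

open Finset Submodule Module

section Duality

variable {K ι κ : Type*} [Field K]

lemma span_eq_top_iff_forall_dual_eq_zero {V : Type*} [AddCommGroup V] [Module K V] (s : Set V) :
    span K s = ⊤ ↔ ∀ f : Dual K V, (∀ x ∈ s, f x = 0) → f = 0 := by
  rw [← dualAnnihilator_eq_bot_iff, Submodule.eq_bot_iff]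
  simp only [← SetLike.mem_coe, coe_dualAnnihilator_span]
  rfl

lemma span_range_eq_top_iff_linearIndependent_swap [Finite ι] (v : κ → ι → K) :
    span K (Set.range v) = ⊤ ↔ LinearIndependent K (Function.swap v) := by
  classical
  have := Fintype.ofFinite ι
  rw [span_eq_top_iff_forall_dual_eq_zero, Fintype.linearIndependent_iff,
    ← (dotProductEquiv K ι).toEquiv.forall_congr_right]
  simp only [Set.forall_mem_range]
  simp [dotProduct, funext_iff, Function.swap]

end Duality

lemma closure_range_eq_top_iff_span_range_eq_top {G M κ : Type*} {n : ℕ} [Group G]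
    [AddCommGroup M] [Module (ZMod n) M] (e : G ≃* Multiplicative M) (v : κ → G) :
    Subgroup.closure (Set.range v) = ⊤ ↔
      span (ZMod n) (Set.range fun j ↦ (e (v j)).toAdd) = ⊤ := by
  let Φ : Subgroup G ≃o Submodule (ZMod n) M :=
    e.comapSubgroup.symm.trans (AddSubgroup.toSubgroup.symm.trans (AddSubgroup.toZModSubmodule n))
  have mem_symm (S : Submodule (ZMod n) M) (g : G) : g ∈ Φ.symm S ↔ (e g).toAdd ∈ S := Iff.rfl
  have map_closure : Φ (Subgroup.closure (Set.range v)) =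
      span (ZMod n) (Set.range fun j ↦ (e (v j)).toAdd) := by
    refine eq_of_forall_ge_iff fun S ↦ ?_
    rw [← Φ.le_symm_apply, Subgroup.closure_le, span_le, Set.range_subset_iff, Set.range_subset_iff]
    exact forall_congr' fun j ↦ mem_symm S (v j)
  rw [← map_closure, map_eq_top_iff]

lemma card_closure_range_eq_top_eq_card_linearIndependent (p : ℕ) [Fact p.Prime] (ι κ : Type*)
    [Finite ι] :
    Nat.card {v : κ → ι → Multiplicative (ZMod p) // Subgroup.closure (Set.range v) = ⊤} =
      Nat.card {w : ι → κ → ZMod p // LinearIndependent (ZMod p) w} := by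
  let transpose : (κ → ι → Multiplicative (ZMod p)) ≃ (ι → κ → ZMod p) :=
    (Equiv.piComm _).trans (.piCongrRight fun _ ↦ .piCongrRight fun _ ↦ Multiplicative.toAdd)
  exact Nat.card_congr <| transpose.subtypeEquiv fun v ↦
    (closure_range_eq_top_iff_span_range_eq_top
      (MulEquiv.funMultiplicative ι (ZMod p)).symm v).trans
      (span_range_eq_top_iff_linearIndependent_swap _)

lemma cast_card_linearIndependent (K V : Type*) [DivisionRing K] [Fintype K] [AddCommGroup V]
    [Module K V] [Finite V] (r : ℕ) :
    (Nat.card {w : Fin r → V // LinearIndependent K w} : ℝ) =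
      ∏ i : Fin r, ((Fintype.card K : ℝ) ^ finrank K V - (Fintype.card K : ℝ) ^ (i : ℕ)) := by
  rcases le_or_gt r (finrank K V) with hr | hr
  · rw [card_linearIndependent hr, Nat.cast_prod]
    refine prod_congr rfl fun i _ ↦ ?_
    rw [Nat.cast_sub (Nat.pow_le_pow_right Fintype.card_pos (i.isLt.le.trans hr)), Nat.cast_pow,
      Nat.cast_pow]
  · have : IsEmpty {w : Fin r → V // LinearIndependent K w} :=
      ⟨fun w ↦ hr.not_ge <| by simpa using w.2.fintype_card_le_finrank⟩
    rw [Nat.card_of_isEmpty, Nat.cast_zero, prod_eq_zero (mem_univ ⟨finrank K V, hr⟩) (sub_self _)]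

section ElementaryAbelian

variable (p : ℕ) [Fact p.Prime] (r : ℕ)

lemma genProb_pi_zmod (k : ℕ) :
    genProb (Fin r → Multiplicative (ZMod p)) k = ∏ i : Fin r, (1 - (p : ℝ) ^ (i : ℕ) / p ^ k) := by
  have hp : (p : ℝ) ^ k ≠ 0 := pow_ne_zero _ (Nat.cast_ne_zero.mpr (NeZero.ne p))
  rw [genProb, card_closure_range_eq_top_eq_card_linearIndependent, cast_card_linearIndependent]
  simp_rw [one_sub_div hp, prod_div_distrib]
  simp [pow_right_comm]

lemma genProb_pi_zmod_succ_le (d : ℕ) :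
    genProb (Fin (r + 1) → Multiplicative (ZMod p)) (r + d) ≤ 1 - ((p : ℝ) ^ d)⁻¹ := by
  have hp : 1 ≤ (p : ℝ) := by exact_mod_cast NeZero.one_le
  have hle {i : ℕ} (hi : i ≤ r) : (p : ℝ) ^ i / p ^ (r + d) ≤ 1 :=
    div_le_one_of_le₀ (pow_le_pow_right₀ hp (by omega)) (by positivity)
  have hlast : (p : ℝ) ^ r / p ^ (r + d) = ((p : ℝ) ^ d)⁻¹ := by
    field_simp
    ring
  have hinit : ∏ i : Fin r, (1 - (p : ℝ) ^ (i : ℕ) / p ^ (r + d)) ≤ 1 :=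
    prod_le_one (fun i _ ↦ sub_nonneg.mpr (hle i.isLt.le))
      fun i _ ↦ sub_le_self _ (by positivity)
  rw [genProb_pi_zmod, Fin.prod_univ_castSucc, ← hlast]
  exact mul_le_of_le_one_left (sub_nonneg.mpr (hle le_rfl)) hinit

end ElementaryAbelian

lemma exists_ceil_logb_div_eq_add_two_and_lt_inv_pow {b ε : ℝ} (hb : 1 < b) (hε0 : 0 < ε)
    (hε1 : ε < 1) :
    ∃ d : ℕ, ⌈Real.logb b (b / ε)⌉ = d + 2 ∧ ε < (b ^ d)⁻¹ := by
  have hlog : Real.logb b (b / ε) = Real.logb b ε⁻¹ + 1 := by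
    rw [div_eq_inv_mul, Real.logb_mul (by positivity) (by positivity), Real.logb_self_eq_one hb]
  have hpos : 0 < ⌈Real.logb b ε⁻¹⌉ :=
    Int.ceil_pos.mpr (Real.logb_pos hb ((one_lt_inv₀ hε0).mpr hε1))
  obtain ⟨d, hd⟩ : ∃ d : ℕ, ⌈Real.logb b ε⁻¹⌉ = d + 1 := ⟨(⌈Real.logb b ε⁻¹⌉ - 1).toNat, by omega⟩
  refine ⟨d, by rw [hlog, Int.ceil_add_one, hd, add_assoc, one_add_one_eq_two], ?_⟩
  have hdlog : (d : ℝ) < Real.logb b ε⁻¹ := by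
    exact_mod_cast Int.lt_ceil.mp (show (d : ℤ) < ⌈Real.logb b ε⁻¹⌉ by omega)
  rw [Real.lt_logb_iff_rpow_lt hb (by positivity), Real.rpow_natCast] at hdlog
  exact (lt_inv_comm₀ (by positivity) hε0).mp hdlog

theorem rank_bound_tightness_general (p : ℕ) [Fact p.Prime] (r : ℕ) (hr : 1 ≤ r) (ε : ℝ)
    (hε0 : 0 < ε) (hε1 : ε < 1) :
    genProbZ (Fin r → Multiplicative (ZMod p)) ((r : ℤ) + ⌈Real.logb p (p / ε)⌉ - 3) < 1 - ε := by
  obtain ⟨s, rfl⟩ := Nat.exists_eq_add_of_le' hr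
  have hp : 1 < (p : ℝ) := Nat.one_lt_cast.mpr (Fact.out : p.Prime).one_lt
  obtain ⟨d, hd, hεd⟩ := exists_ceil_logb_div_eq_add_two_and_lt_inv_pow hp hε0 hε1
  have hk : ((s + 1 : ℕ) : ℤ) + ⌈Real.logb p (p / ε)⌉ - 3 = (s + d : ℕ) := by
    rw [hd]
    push_cast
    ring
  rw [hk, genProbZ, if_pos (Int.natCast_nonneg _), Int.toNat_natCast]
  calc genProb (Fin (s + 1) → Multiplicative (ZMod p)) (s + d)
      ≤ 1 - ((p : ℝ) ^ d)⁻¹ := genProb_pi_zmod_succ_le p s d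
    _ < 1 - ε := sub_lt_sub_left hεd 1

theorem rank_bound_tightness (r : ℕ) (hr : 1 ≤ r) (ε : ℝ) (hε0 : 0 < ε) (hε1 : ε < 1) :
    genProbZ (Fin r → Multiplicative (ZMod 2)) ((r : ℤ) + ⌈Real.logb 2 (2 / ε)⌉ - 3) <
      1 - ε := by
  exact_mod_cast rank_bound_tightness_general 2 r hr ε hε0 hε1
end

section
/- Let G be a finite nilpotent group and let k be a natural number. For each prime p dividing |G| let G_p denote the (unique, normal) Sylow p-subgroup of G. Then φ_k(G) = ∏_{p | |G|} φ_k(G_p), the product ranging over the distinct prime divisors of |G|. -/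
/-!
A finite nilpotent group is the direct product of its Sylow subgroups, whose orders are pairwise
coprime. In a product of groups of pairwise coprime orders, the order of a subgroup projecting onto
every factor is divisible by the order of each factor, hence by the order of the product. So a tuple
generates the product exactly when its coordinate tuples generate the factors, and the generating
tuples are counted factor by factor.
-/

section Generation

variable {G H : Type*} [Group G] [Group H] {κ : Sort*}

theorem map_closure_range (f : G →* H) (v : κ → G) :
    (Subgroup.closure (Set.range v)).map f = Subgroup.closure (Set.range fun a => f (v a)) := by
  rw [MonoidHom.map_closure, ← Set.range_comp, Function.comp_def]

theorem closure_range_mulEquiv_eq_top_iff (e : G ≃* H) (v : κ → G) :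
    Subgroup.closure (Set.range fun a => e (v a)) = ⊤ ↔ Subgroup.closure (Set.range v) = ⊤ := by
  have hmap : (Subgroup.closure (Set.range v)).map (e : G →* H) =
      Subgroup.closure (Set.range fun a => e (v a)) :=
    map_closure_range (e : G →* H) v
  rw [← hmap, ← Subgroup.map_equiv_top e]
  exact (Subgroup.map_injective e.injective).eq_iff

theorem genProb_congr (e : G ≃* H) (k : ℕ) : genProb G k = genProb H k := by
  have hgen : Nat.card {v : Fin k → G // Subgroup.closure (Set.range v) = ⊤} =
      Nat.card {w : Fin k → H // Subgroup.closure (Set.range w) = ⊤} :=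
    Nat.card_congr <| ((Equiv.refl (Fin k)).arrowCongr e.toEquiv).subtypeEquiv fun v =>
      (closure_range_mulEquiv_eq_top_iff e v).symm
  rw [genProb, genProb, hgen, Nat.card_congr e.toEquiv]

end Generation

section CoprimeProduct

variable {ι : Type*} {M : ι → Type*} [∀ i, Group (M i)] [∀ i, Finite (M i)]

theorem eq_top_of_forall_map_eval_eq_top [Finite ι]
    (hM : Pairwise fun i j => (Nat.card (M i)).Coprime (Nat.card (M j)))
    {H : Subgroup (∀ i, M i)} (hH : ∀ i, H.map (Pi.evalMonoidHom M i) = ⊤) : H = ⊤ := by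
  have := Fintype.ofFinite ι
  have hfactor (i : ι) : Nat.card (M i) ∣ Nat.card H := by
    simpa only [hH i, Subgroup.card_top] using H.card_map_dvd (Pi.evalMonoidHom M i)
  have hprod : ∏ i, Nat.card (M i) ∣ Nat.card H :=
    Finset.prod_dvd_of_isRelPrime
      (fun i _ j _ hij => Nat.coprime_iff_isRelPrime.mp (hM hij)) fun i _ => hfactor i
  rw [← Nat.card_pi] at hprod
  exact H.eq_top_of_le_card (Nat.le_of_dvd Nat.card_pos hprod)

theorem closure_range_eq_top_iff_forall_eval [Finite ι] {κ : Sort*}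
    (hM : Pairwise fun i j => (Nat.card (M i)).Coprime (Nat.card (M j))) (v : κ → ∀ i, M i) :
    Subgroup.closure (Set.range v) = ⊤ ↔
      ∀ i, Subgroup.closure (Set.range fun a => v a i) = ⊤ := by
  have hmap (i : ι) : (Subgroup.closure (Set.range v)).map (Pi.evalMonoidHom M i) =
      Subgroup.closure (Set.range fun a => v a i) :=
    map_closure_range (Pi.evalMonoidHom M i) v
  constructor
  · intro hv i
    rw [← hmap, hv, Subgroup.map_top_of_surjective _ (Function.surjective_eval i)]
  · intro hv
    exact eq_top_of_forall_map_eval_eq_top hM fun i => (hmap i).trans (hv i)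

theorem card_closure_range_pi_eq_top [Fintype ι] (κ : Type*)
    (hM : Pairwise fun i j => (Nat.card (M i)).Coprime (Nat.card (M j))) :
    Nat.card {v : κ → ∀ i, M i // Subgroup.closure (Set.range v) = ⊤} =
      ∏ i, Nat.card {w : κ → M i // Subgroup.closure (Set.range w) = ⊤} :=
  calc
    _ = Nat.card {w : ∀ i, κ → M i // ∀ i, Subgroup.closure (Set.range (w i)) = ⊤} :=
      Nat.card_congr <| (Equiv.piComm fun _ i => M i).subtypeEquiv
        (closure_range_eq_top_iff_forall_eval hM)
    _ = Nat.card (∀ i, {w : κ → M i // Subgroup.closure (Set.range w) = ⊤}) :=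
      Nat.card_congr <| Equiv.subtypePiEquivPi
        (p := fun i (w : κ → M i) => Subgroup.closure (Set.range w) = ⊤)
    _ = _ := Nat.card_pi

theorem genProb_pi_of_pairwise_coprime_card [Fintype ι]
    (hM : Pairwise fun i j => (Nat.card (M i)).Coprime (Nat.card (M j))) (k : ℕ) :
    genProb (∀ i, M i) k = ∏ i, genProb (M i) k := by
  simp only [genProb, card_closure_range_pi_eq_top (Fin k) hM, Nat.card_pi, Nat.cast_prod,
    Finset.prod_div_distrib, Finset.prod_pow]

end CoprimeProduct

/-- The decomposition of a finite nilpotent group as the direct product of its Sylow subgroups.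
The family `P` names the Sylow subgroups, which are unique since they are normal; this replaces the
product over all Sylow `p`-subgroups in `Sylow.directProductOfNormal` by the single factor `P p`. -/
noncomputable def mulEquivPiSylow {G : Type*} [Group G] [Finite G] [Group.IsNilpotent G]
    (P : ∀ p : ℕ, Sylow p G) : G ≃* ∀ p : (Nat.card G).primeFactors, P p :=
  (Sylow.directProductOfNormal fun _ => inferInstance).symm.trans <|
    MulEquiv.piCongrRight fun p =>
      have : Fact (p : ℕ).Prime := ⟨Nat.prime_of_mem_primeFactors p.2⟩
      have : Subsingleton (Sylow p G) :=
        ((P p).unique_of_normal inferInstance).instSubsingleton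
      letI : Unique (Sylow p G) := uniqueOfSubsingleton (P p)
      MulEquiv.piUnique fun Q : Sylow p G => Q

theorem genProb_nilpotent_prod_sylow (G : Type*) [Group G] [Finite G] [Group.IsNilpotent G]
    (k : ℕ) (P : ∀ p : ℕ, Sylow p G) :
    genProb G k =
      ∏ p ∈ (Nat.card G).primeFactors, genProb ↥((P p : Subgroup G)) k := by
  have (p : (Nat.card G).primeFactors) : Fact (p : ℕ).Prime :=
    ⟨Nat.prime_of_mem_primeFactors p.2⟩
  have hcoprime : Pairwise fun p q : (Nat.card G).primeFactors =>
      (Nat.card (P p)).Coprime (Nat.card (P q)) :=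
    fun p q hpq => IsPGroup.coprime_card_of_ne p q (Subtype.val_injective.ne hpq) _ _
      (P p).isPGroup' (P q).isPGroup'
  calc
    genProb G k = genProb (∀ p : (Nat.card G).primeFactors, P p) k :=
      genProb_congr (mulEquivPiSylow P) k
    _ = ∏ p : (Nat.card G).primeFactors, genProb (P p) k :=
      genProb_pi_of_pairwise_coprime_card hcoprime k
    _ = ∏ p ∈ (Nat.card G).primeFactors, genProb (P p) k :=
      Finset.prod_coe_sort (Nat.card G).primeFactors fun p => genProb (P p) k
end

section
/- Let G be a finite abelian group. Then rank(G) + 2 independently and uniformly chosen random elements of G generate G with probability at least 1/2; that is, φ_{rank(G)+2}(G) ≥ 1/2. -/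
/-!
A tuple fails to generate a finite nilpotent group `G` only if it lies in a maximal subgroup,
which is the kernel of a surjection onto `ℤ/p` for a prime `p` dividing `|G|`. There are at most
`p ^ rank G` homomorphisms to `ℤ/p`, and a random `k`-tuple lies in the kernel of a given
surjective one with probability `p ^ (-k)`. By the union bound, `k ≥ rank G + 2` elements fail to
generate `G` with probability at most `∑ p ^ (-2)`, which is less than `1 / 2`: replacing the odd
primes by all odd numbers `≥ 3` bounds it by `1 / 4` plus a sum that, compared with a telescoping
one, is less than `1 / 4`.
-/

open Finset Function

theorem sum_range_one_div_odd_sq_lt (n : ℕ) :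
    ∑ i ∈ range n, 1 / (2 * (i : ℝ) + 3) ^ 2 < 1 / 4 := by
  let tail (i : ℕ) : ℝ := 1 / (4 * ((i : ℝ) + 1))
  have term_le (i : ℕ) : 1 / (2 * (i : ℝ) + 3) ^ 2 ≤ tail i - tail (i + 1) := by
    have tail_sub : tail i - tail (i + 1) = 1 / (4 * ((i : ℝ) + 1) * (i + 2)) := by
      simp only [tail]
      push_cast
      field_simp
      ring
    rw [tail_sub]
    exact one_div_le_one_div_of_le (by positivity) (by nlinarith)
  calc ∑ i ∈ range n, 1 / (2 * (i : ℝ) + 3) ^ 2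
      ≤ ∑ i ∈ range n, (tail i - tail (i + 1)) := sum_le_sum fun i _ ↦ term_le i
    _ = 1 / 4 - tail n := by rw [sum_range_sub']; norm_num [tail]
    _ < 1 / 4 := sub_lt_self _ (by positivity)

theorem sum_one_div_sq_lt_half_of_prime {s : Finset ℕ} (hs : ∀ p ∈ s, p.Prime) :
    ∑ p ∈ s, 1 / (p : ℝ) ^ 2 < 1 / 2 := by
  let odds : Finset ℕ := (range (s.sup id)).image (2 * · + 3)
  have subset_odds : s ⊆ insert 2 odds := fun p hp ↦ by
    have p_le_sup : p ≤ s.sup id := le_sup (f := id) hp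
    obtain rfl | ⟨m, rfl⟩ := (hs p hp).eq_two_or_odd'
    · exact mem_insert_self _ _
    · have := (hs _ hp).two_le
      exact mem_insert_of_mem (mem_image.2 ⟨m - 1, mem_range.2 (by lia), by lia⟩)
  have two_notMem : 2 ∉ odds := by grind
  calc ∑ p ∈ s, 1 / (p : ℝ) ^ 2
      ≤ ∑ p ∈ insert 2 odds, 1 / (p : ℝ) ^ 2 :=
        sum_le_sum_of_subset_of_nonneg subset_odds fun _ _ _ ↦ by positivity
    _ = 1 / 4 + ∑ i ∈ range (s.sup id), 1 / (2 * (i : ℝ) + 3) ^ 2 := by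
        rw [sum_insert two_notMem, sum_image fun _ _ _ _ h ↦ by lia]
        norm_num
    _ < 1 / 2 := by linarith [sum_range_one_div_odd_sq_lt (s.sup id)]

section Group

variable {G : Type*} [Group G]

theorem prime_index_of_isCoatom [Group.IsNilpotent G] {M : Subgroup G} (hM : IsCoatom M) :
    M.index.Prime := by
  have : M.Normal :=
    Subgroup.NormalizerCondition.normal_of_coatom M Group.normalizerCondition_of_isNilpotent hM
  have : IsSimpleOrder (Set.Ici M) := Set.isSimpleOrder_Ici_iff_isCoatom.2 hM
  have : IsSimpleOrder (Subgroup (G ⧸ M)) :=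
    OrderIso.isSimpleOrder (β := Set.Ici M) (QuotientGroup.comapMk'OrderIso M)
  have : Nontrivial (G ⧸ M) := Subgroup.nontrivial_iff.1 inferInstance
  have : IsSimpleGroup (G ⧸ M) := ⟨fun K _ ↦ eq_bot_or_eq_top K⟩
  exact IsSimpleGroup.prime_card

theorem exists_surjective_zmod_prime_le_ker [Group.IsNilpotent G] [IsCoatomic (Subgroup G)]
    {H : Subgroup G} (hH : H ≠ ⊤) :
    ∃ p : ℕ, p.Prime ∧ ∃ f : G →* Multiplicative (ZMod p), Surjective f ∧ H ≤ f.ker := by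
  obtain ⟨M, hM, hHM⟩ := (eq_top_or_exists_le_coatom H).resolve_left hH
  have : M.Normal :=
    Subgroup.NormalizerCondition.normal_of_coatom M Group.normalizerCondition_of_isNilpotent hM
  have hp : M.index.Prime := prime_index_of_isCoatom hM
  have : Fact M.index.Prime := ⟨hp⟩
  let e : G ⧸ M ≃* Multiplicative (ZMod M.index) :=
    mulEquivOfPrimeCardEq (p := M.index) rfl (Nat.card_zmod _)
  refine ⟨M.index, hp, e.toMonoidHom.comp (QuotientGroup.mk' M),
    e.surjective.comp (QuotientGroup.mk'_surjective M), ?_⟩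
  rwa [MulEquiv.toMonoidHom_eq_coe, MonoidHom.ker_mulEquiv_comp, QuotientGroup.ker_mk']

variable (G) in
theorem card_monoidHom_le_card_pow_rank [Group.FG G] (A : Type*) [Monoid A] [Finite A] :
    Nat.card (G →* A) ≤ Nat.card A ^ Group.rank G := by
  obtain ⟨S, card_S, closure_S⟩ := Group.rank_spec G
  have restrict_injective : Injective fun (f : G →* A) (s : S) ↦ f s := fun f g hfg ↦
    MonoidHom.eq_of_eqOn_dense closure_S fun s hs ↦ congrFun hfg ⟨s, hs⟩
  simpa [Nat.card_fun, card_S] using Nat.card_le_card_of_injective _ restrict_injective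

theorem ncard_setOf_forall_mem (ι : Type*) [Finite ι] (H : Subgroup G) :
    {v : ι → G | ∀ i, v i ∈ H}.ncard = Nat.card H ^ Nat.card ι := by
  rw [← Nat.card_coe_set_eq, ← Nat.card_fun]
  exact Nat.card_congr Equiv.subtypePiEquivPi

variable {A : Type*} [Group A] [Finite A]

theorem card_ker_eq_div_of_surjective {f : G →* A} (hf : Surjective f) :
    (Nat.card f.ker : ℝ) = Nat.card G / Nat.card A := by
  have hA : (Nat.card A : ℝ) ≠ 0 := Nat.cast_ne_zero.2 Nat.card_pos.ne'
  rw [eq_div_iff hA, ← Subgroup.card_top (G := A), ← MonoidHom.range_eq_top.2 hf,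
    ← Subgroup.index_ker, ← f.ker.card_mul_index, Nat.cast_mul]

variable (G A) in
theorem ncard_setOf_exists_surjective_forall_mem_ker_le [Finite G] (ι : Type*) [Finite ι] :
    ({v : ι → G | ∃ f : G →* A, Surjective f ∧ ∀ i, v i ∈ f.ker}.ncard : ℝ) ≤
      Nat.card A ^ Group.rank G * (Nat.card G / Nat.card A) ^ Nat.card ι := by
  have : Finite (G →* A) := .of_injective _ DFunLike.coe_injective
  have := Fintype.ofFinite (G →* A)
  classical
  let epis : Finset (G →* A) := {f | Surjective f}
  have setOf_eq : {v : ι → G | ∃ f : G →* A, Surjective f ∧ ∀ i, v i ∈ f.ker} =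
      ⋃ f ∈ epis, {v | ∀ i, v i ∈ f.ker} := by
    ext v
    simp [epis]
  have card_epis : (#epis : ℝ) ≤ Nat.card A ^ Group.rank G := by
    exact_mod_cast (card_le_univ epis).trans
      (Nat.card_eq_fintype_card.symm.trans_le (card_monoidHom_le_card_pow_rank G A))
  calc ({v : ι → G | ∃ f : G →* A, Surjective f ∧ ∀ i, v i ∈ f.ker}.ncard : ℝ)
      ≤ ∑ f ∈ epis, ({v : ι → G | ∀ i, v i ∈ f.ker}.ncard : ℝ) := by
        rw [setOf_eq]
        exact_mod_cast epis.set_ncard_biUnion_le _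
    _ = ∑ _ ∈ epis, ((Nat.card G : ℝ) / Nat.card A) ^ Nat.card ι :=
        sum_congr rfl fun _ hf ↦ by
          rw [ncard_setOf_forall_mem, Nat.cast_pow,
            card_ker_eq_div_of_surjective (mem_filter.1 hf).2]
    _ ≤ Nat.card A ^ Group.rank G * (Nat.card G / Nat.card A) ^ Nat.card ι := by
        rw [sum_const, nsmul_eq_mul]
        gcongr

end Group

section genProb

variable (G : Type*) [Group G] [Finite G]

theorem one_sub_genProb (k : ℕ) :
    1 - genProb G k =
      {v : Fin k → G | Subgroup.closure (Set.range v) ≠ ⊤}.ncard / (Nat.card G : ℝ) ^ k := by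
  have hG : (Nat.card G : ℝ) ^ k ≠ 0 := pow_ne_zero _ (Nat.cast_ne_zero.2 Nat.card_pos.ne')
  have card_add : Nat.card {v : Fin k → G // Subgroup.closure (Set.range v) = ⊤} +
      {v : Fin k → G | Subgroup.closure (Set.range v) ≠ ⊤}.ncard = Nat.card G ^ k := by
    have card_tuples : Nat.card (Fin k → G) = Nat.card G ^ k := by
      rw [Nat.card_fun, Nat.card_fin]
    rw [← card_tuples]
    exact Set.ncard_add_ncard_compl {v : Fin k → G | Subgroup.closure (Set.range v) = ⊤}
  rw [genProb, one_sub_div hG, ← Nat.cast_pow, ← card_add, Nat.cast_add, add_sub_cancel_left]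

theorem one_sub_genProb_le_sum_primeFactors [Group.IsNilpotent G] (k : ℕ) :
    1 - genProb G k ≤ ∑ p ∈ (Nat.card G).primeFactors, (p : ℝ) ^ Group.rank G / p ^ k := by
  let bad (p : ℕ) : Set (Fin k → G) :=
    {v | ∃ f : G →* Multiplicative (ZMod p), Surjective f ∧ ∀ i, v i ∈ f.ker}
  have subset_bad : {v : Fin k → G | Subgroup.closure (Set.range v) ≠ ⊤} ⊆
      ⋃ p ∈ (Nat.card G).primeFactors, bad p := fun v hv ↦ by
    obtain ⟨p, hp, f, hf, hle⟩ := exists_surjective_zmod_prime_le_ker hv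
    have card_zmod : Nat.card (Multiplicative (ZMod p)) = p := Nat.card_zmod p
    have hpG : p ∣ Nat.card G := card_zmod ▸ Subgroup.card_dvd_of_surjective f hf
    exact Set.mem_biUnion (Nat.mem_primeFactors.2 ⟨hp, hpG, Nat.card_pos.ne'⟩)
      ⟨f, hf, fun i ↦ hle (Subgroup.subset_closure ⟨i, rfl⟩)⟩
  have ncard_bad_le {p : ℕ} (hp : p ∈ (Nat.card G).primeFactors) :
      ((bad p).ncard : ℝ) ≤ p ^ Group.rank G * (Nat.card G / p) ^ k := by
    have : NeZero p := ⟨(Nat.prime_of_mem_primeFactors hp).ne_zero⟩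
    simpa [bad] using
      ncard_setOf_exists_surjective_forall_mem_ker_le G (Multiplicative (ZMod p)) (Fin k)
  have hG : 0 < (Nat.card G : ℝ) ^ k := pow_pos (Nat.cast_pos.2 Nat.card_pos) k
  rw [one_sub_genProb, div_le_iff₀ hG, sum_mul]
  calc ({v : Fin k → G | Subgroup.closure (Set.range v) ≠ ⊤}.ncard : ℝ)
      ≤ ∑ p ∈ (Nat.card G).primeFactors, ((bad p).ncard : ℝ) := by
        exact_mod_cast (Set.ncard_le_ncard subset_bad).trans (set_ncard_biUnion_le _ _)
    _ ≤ ∑ p ∈ (Nat.card G).primeFactors, (p : ℝ) ^ Group.rank G * (Nat.card G / p) ^ k :=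
        sum_le_sum fun _ hp ↦ ncard_bad_le hp
    _ = ∑ p ∈ (Nat.card G).primeFactors,
          (p : ℝ) ^ Group.rank G / p ^ k * (Nat.card G : ℝ) ^ k :=
        sum_congr rfl fun _ _ ↦ by rw [div_pow, mul_div_assoc', div_mul_eq_mul_div]

end genProb

theorem abelian_genProb_rank_add_two_general (G : Type*) [Group G] [Group.IsNilpotent G]
    [Finite G] {k : ℕ} (hk : Group.rank G + 2 ≤ k) : 1 / 2 < genProb G k := by
  have term_le {p : ℕ} (hp : p.Prime) : (p : ℝ) ^ Group.rank G / p ^ k ≤ 1 / (p : ℝ) ^ 2 := by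
    have one_le : (1 : ℝ) ≤ p := Nat.one_le_cast.2 hp.one_le
    rw [div_le_div_iff₀ (by positivity) (by positivity), ← pow_add, one_mul]
    exact pow_le_pow_right₀ one_le hk
  have fail_lt : 1 - genProb G k < 1 / 2 :=
    calc 1 - genProb G k
        ≤ ∑ p ∈ (Nat.card G).primeFactors, (p : ℝ) ^ Group.rank G / p ^ k :=
          one_sub_genProb_le_sum_primeFactors G k
      _ ≤ ∑ p ∈ (Nat.card G).primeFactors, 1 / (p : ℝ) ^ 2 :=
          sum_le_sum fun _ hp ↦ term_le (Nat.prime_of_mem_primeFactors hp)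
      _ < 1 / 2 := sum_one_div_sq_lt_half_of_prime fun _ ↦ Nat.prime_of_mem_primeFactors
  linarith

theorem abelian_genProb_rank_add_two (G : Type*) [CommGroup G] [Finite G] :
    (1 : ℝ) / 2 ≤ genProb G (Group.rank G + 2) :=
  (abelian_genProb_rank_add_two_general G le_rfl).le
end

section
/- Let G be a finite nilpotent group and let k be a natural number. Then φ_k(G) ≥ φ_k((ℤ/2ℤ)^{Ω(|G|)}); that is, among all finite nilpotent groups of composition length n = Ω(|G|), the elementary abelian 2-group (ℤ/2ℤ)^n is the hardest to generate by random elements. -/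
/-!
Reveal the random elements one at a time and follow the subgroup `H` generated so far. The next
element falls into `H` with probability `1 / |G : H| ≤ 2 ^ (-c)`, where `c = Ω(|G : H|)`, and
otherwise lowers `c` by at least one. In an elementary abelian `2`-group the next element falls
into `H` with probability exactly `2 ^ (-c)` and otherwise lowers `c` by exactly one, so there `c`
reaches zero most slowly.
-/

open ArithmeticFunction (cardFactors)
open scoped BigOperators

section RelativeGeneration

variable {G : Type*} [Group G]

/-- The probability that `k` uniformly random elements of the finite group `G` generate `G`
together with the subgroup `H`. -/
noncomputable def relGenProb (H : Subgroup G) (k : ℕ) : ℝ :=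
  (Nat.card {v : Fin k → G // H ⊔ Subgroup.closure (Set.range v) = ⊤} : ℝ) / (Nat.card G : ℝ) ^ k

lemma relGenProb_bot (k : ℕ) : relGenProb (⊥ : Subgroup G) k = genProb G k := by
  simp only [relGenProb, genProb, bot_sup_eq]

lemma relGenProb_zero (H : Subgroup G) [Decidable (H = ⊤)] :
    relGenProb H 0 = if H = ⊤ then 1 else 0 := by
  split_ifs with hH <;> simp [relGenProb, hH]

lemma sup_closure_range_cons (H : Subgroup G) {k : ℕ} (g : G) (v : Fin k → G) :
    H ⊔ Subgroup.closure (Set.range (Fin.cons g v : Fin (k + 1) → G)) =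
      H ⊔ Subgroup.zpowers g ⊔ Subgroup.closure (Set.range v) := by
  rw [Fin.range_cons, Set.insert_eq, Subgroup.closure_union, ← Subgroup.zpowers_eq_closure,
    sup_assoc]

lemma card_relGenerating_succ [Fintype G] (H : Subgroup G) (k : ℕ) :
    Nat.card {v : Fin (k + 1) → G // H ⊔ Subgroup.closure (Set.range v) = ⊤} =
      ∑ g : G, Nat.card {v : Fin k → G //
        H ⊔ Subgroup.zpowers g ⊔ Subgroup.closure (Set.range v) = ⊤} := by
  rw [← Nat.card_sigma]
  refine Nat.card_congr (Equiv.trans ?_ (Equiv.subtypeProdEquivSigmaSubtype fun g v =>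
    H ⊔ Subgroup.zpowers g ⊔ Subgroup.closure (Set.range v) = ⊤))
  refine ((Fin.consEquiv fun _ => G).subtypeEquiv fun x => ?_).symm
  rw [← sup_closure_range_cons]
  rfl

lemma relGenProb_succ [Fintype G] (H : Subgroup G) (k : ℕ) :
    relGenProb H (k + 1) = 𝔼 g : G, relGenProb (H ⊔ Subgroup.zpowers g) k := by
  simp only [relGenProb, card_relGenerating_succ, Fintype.expect_eq_sum_div_card, Nat.cast_sum,
    ← Finset.sum_div, div_div, pow_succ, Nat.card_eq_fintype_card]

lemma expect_ite_mem_subgroup {𝕜 : Type*} [Field 𝕜] [CharZero 𝕜] [Fintype G] (H : Subgroup G)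
    [DecidablePred (· ∈ H)] (a b : 𝕜) :
    𝔼 g : G, (if g ∈ H then a else b) = (H.index : 𝕜)⁻¹ * a + (1 - (H.index : 𝕜)⁻¹) * b := by
  have hcard : (Fintype.card G : 𝕜) = Nat.card H * H.index := by
    exact_mod_cast Nat.card_eq_fintype_card.symm.trans H.card_mul_index.symm
  have hH : (Nat.card H : 𝕜) ≠ 0 := Nat.cast_ne_zero.2 Nat.card_pos.ne'
  have hindex : (H.index : 𝕜) ≠ 0 := Nat.cast_ne_zero.2 H.index_ne_zero_of_finite
  have hindicator (g : G) : (if g ∈ H then a else b) = b + if g ∈ H then a - b else 0 := by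
    split_ifs <;> ring
  have hsum : ∑ g : G, (if g ∈ H then a - b else 0) = Nat.card H * (a - b) := by
    rw [← Finset.sum_filter, Finset.sum_const, nsmul_eq_mul, ← Fintype.card_subtype,
      ← Nat.card_eq_fintype_card]
  rw [Finset.expect_congr rfl fun g _ => hindicator g, Finset.expect_add_distrib,
    Fintype.expect_const, Fintype.expect_eq_sum_div_card, hsum, hcard]
  field_simp
  ring

end RelativeGeneration

section Index

variable {G : Type*} [Group G]

lemma two_pow_cardFactors_le {n : ℕ} (hn : n ≠ 0) : 2 ^ cardFactors n ≤ n := by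
  conv_rhs => rw [← Nat.prod_primeFactorsList hn]
  exact List.pow_card_le_prod _ _ fun p hp => (Nat.prime_of_mem_primeFactorsList hp).two_le

lemma cardFactors_index_lt_of_lt {H K : Subgroup G} [H.FiniteIndex] (hHK : H < K) :
    cardFactors K.index < cardFactors H.index := by
  have hmul := Subgroup.relIndex_mul_index hHK.le
  have hne : H.relIndex K * K.index ≠ 0 := hmul ▸ Subgroup.FiniteIndex.index_ne_zero
  have hone : H.relIndex K ≠ 1 := mt Subgroup.relIndex_eq_one.1 hHK.not_ge
  rw [← hmul, ArithmeticFunction.cardFactors_mul (left_ne_zero_of_mul hne)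
    (right_ne_zero_of_mul hne), lt_add_iff_pos_left,
    ArithmeticFunction.cardFactors_pos_iff_one_lt]
  exact Nat.one_lt_iff_ne_zero_and_ne_one.2 ⟨left_ne_zero_of_mul hne, hone⟩

lemma two_mul_index_sup_zpowers {H : Subgroup G} [H.Normal] {g : G} (hg : g ∉ H)
    (hsq : g ^ 2 = 1) : 2 * (H ⊔ Subgroup.zpowers g).index = H.index := by
  have hdvd : H.relIndex (Subgroup.zpowers g) ∣ 2 :=
    (H.relIndex_dvd_card _).trans (Nat.card_zpowers g ▸ orderOf_dvd_of_pow_eq_one hsq)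
  have hone : H.relIndex (Subgroup.zpowers g) ≠ 1 := by
    rwa [Ne, Subgroup.relIndex_eq_one, Subgroup.zpowers_le]
  rw [← Subgroup.relIndex_mul_index (le_sup_left : H ≤ H ⊔ Subgroup.zpowers g),
    Subgroup.relIndex_sup_left, ((Nat.dvd_prime Nat.prime_two).1 hdvd).resolve_left hone]

lemma index_sup_zpowers_eq_two_pow {H : Subgroup G} [H.Normal] {g : G} (hg : g ∉ H)
    (hsq : g ^ 2 = 1) {c : ℕ} (hH : H.index = 2 ^ c) :
    (H ⊔ Subgroup.zpowers g).index = 2 ^ (c - 1) := by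
  have hhalf := two_mul_index_sup_zpowers hg hsq
  have hc : c ≠ 0 := by
    rintro rfl
    omega
  rw [hH, ← Nat.sub_one_add_one hc, pow_succ'] at hhalf
  exact Nat.eq_of_mul_eq_mul_left two_pos hhalf

lemma normal_of_forall_sq_eq_one (hG : ∀ x : G, x ^ 2 = 1) (H : Subgroup G) : H.Normal where
  conj_mem x hx y := by
    have hcomm := Commute.of_orderOf_dvd_two (fun z => orderOf_dvd_of_pow_eq_one (hG z)) y x
    rwa [hcomm.eq, mul_inv_cancel_right]

end Index

/-- The probability that `k` uniformly random elements of an elementary abelian `2`-group generate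
it together with a subgroup of index `2 ^ c`, defined by conditioning on the first element. At
`c = 0` the truncated difference `c - 1` is harmless because its coefficient vanishes. -/
noncomputable def binaryGenProb (c : ℕ) : ℕ → ℝ
  | 0 => if c = 0 then 1 else 0
  | k + 1 => (2 ^ c)⁻¹ * binaryGenProb c k + (1 - (2 ^ c)⁻¹) * binaryGenProb (c - 1) k

lemma convexCombo_le_convexCombo {R : Type*} [CommRing R] [PartialOrder R] [IsOrderedRing R]
    {s t a b : R} (hst : s ≤ t) (hab : a ≤ b) :
    t * a + (1 - t) * b ≤ s * a + (1 - s) * b := by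
  have h := mul_le_mul_of_nonneg_right hst (sub_nonneg.2 hab)
  linear_combination h

lemma binaryGenProb_antitone (k : ℕ) : Antitone fun c => binaryGenProb c k := by
  induction k with
  | zero => exact antitone_nat_of_succ_le fun c => by cases c <;> simp [binaryGenProb]
  | succ k ih =>
    refine antitone_nat_of_succ_le fun c => ?_
    have hweight (n : ℕ) : (0 : ℝ) ≤ (2 ^ n)⁻¹ ∧ ((2 : ℝ) ^ n)⁻¹ ≤ 1 :=
      ⟨by positivity, inv_le_one_of_one_le₀ (one_le_pow₀ one_le_two)⟩
    calc binaryGenProb (c + 1) (k + 1)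
        ≤ 0 * binaryGenProb (c + 1) k + (1 - 0) * binaryGenProb c k :=
          convexCombo_le_convexCombo (hweight _).1 (ih c.le_succ)
      _ = 1 * binaryGenProb c k + (1 - 1) * binaryGenProb (c - 1) k := by ring
      _ ≤ binaryGenProb c (k + 1) :=
          convexCombo_le_convexCombo (hweight _).2 (ih (Nat.sub_le c 1))

theorem binaryGenProb_le_relGenProb {G : Type*} [Group G] [Finite G] (H : Subgroup G) (k : ℕ) :
    binaryGenProb (cardFactors H.index) k ≤ relGenProb H k := by
  classical
  have := Fintype.ofFinite G
  induction k generalizing H with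
  | zero =>
    simp only [relGenProb_zero, binaryGenProb]
    simp [ArithmeticFunction.cardFactors_eq_zero_iff_eq_zero_or_one, H.index_ne_zero_of_finite]
  | succ k ih =>
    set c := cardFactors H.index
    have hindex : (H.index : ℝ)⁻¹ ≤ (2 ^ c)⁻¹ := by
      gcongr
      exact_mod_cast two_pow_cardFactors_le H.index_ne_zero_of_finite
    calc binaryGenProb c (k + 1)
        ≤ (H.index : ℝ)⁻¹ * binaryGenProb c k +
            (1 - (H.index : ℝ)⁻¹) * binaryGenProb (c - 1) k :=
          convexCombo_le_convexCombo hindex (binaryGenProb_antitone k (Nat.sub_le c 1))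
      _ = 𝔼 g : G, (if g ∈ H then binaryGenProb c k else binaryGenProb (c - 1) k) :=
          (expect_ite_mem_subgroup H _ _).symm
      _ ≤ 𝔼 g : G, relGenProb (H ⊔ Subgroup.zpowers g) k := by
          refine Finset.expect_le_expect fun g _ => ?_
          split_ifs with hg
          · rw [sup_eq_left.2 (Subgroup.zpowers_le.2 hg)]
            exact ih H
          · have hlt : H < H ⊔ Subgroup.zpowers g := by simpa [left_lt_sup] using hg
            have hdrop := cardFactors_index_lt_of_lt hlt
            exact (binaryGenProb_antitone k (Nat.le_sub_one_of_lt hdrop)).trans (ih _)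
      _ = relGenProb H (k + 1) := (relGenProb_succ H k).symm

theorem relGenProb_eq_binaryGenProb {E : Type*} [Group E] [Finite E]
    (hE : ∀ x : E, x ^ 2 = 1) {H : Subgroup E} {c : ℕ} (hH : H.index = 2 ^ c) (k : ℕ) :
    relGenProb H k = binaryGenProb c k := by
  classical
  have := Fintype.ofFinite E
  induction k generalizing H c with
  | zero => simp [relGenProb_zero, binaryGenProb, ← Subgroup.index_eq_one, hH]
  | succ k ih =>
    calc relGenProb H (k + 1)
        = 𝔼 g : E, relGenProb (H ⊔ Subgroup.zpowers g) k := relGenProb_succ H k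
      _ = 𝔼 g : E, (if g ∈ H then binaryGenProb c k else binaryGenProb (c - 1) k) := by
          refine Finset.expect_congr rfl fun g _ => ?_
          split_ifs with hg
          · rw [sup_eq_left.2 (Subgroup.zpowers_le.2 hg), ih hH]
          · have := normal_of_forall_sq_eq_one hE H
            exact ih (index_sup_zpowers_eq_two_pow hg (hE g) hH)
      _ = binaryGenProb c (k + 1) := by
          rw [expect_ite_mem_subgroup, hH, binaryGenProb, Nat.cast_pow, Nat.cast_ofNat]

theorem genProb_ge_elementary_abelian_two_general (G : Type*) [Group G] [Finite G] (k : ℕ) :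
    genProb (Fin (Nat.card G).primeFactorsList.length → Multiplicative (ZMod 2)) k ≤
      genProb G k := by
  set n := (Nat.card G).primeFactorsList.length with hn
  have hsq (x : Fin n → Multiplicative (ZMod 2)) : x ^ 2 = 1 :=
    funext fun i => (pow_two (x i)).trans (CharTwo.add_self_eq_zero (x i).toAdd)
  have hindex : (⊥ : Subgroup (Fin n → Multiplicative (ZMod 2))).index = 2 ^ n := by
    simp [Subgroup.index_bot]
  rw [← relGenProb_bot, ← relGenProb_bot, relGenProb_eq_binaryGenProb hsq hindex, hn,
    ← ArithmeticFunction.cardFactors_apply, ← Subgroup.index_bot]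
  exact binaryGenProb_le_relGenProb ⊥ k

theorem genProb_ge_elementary_abelian_two (G : Type*) [Group G] [Finite G]
    [Group.IsNilpotent G] (k : ℕ) :
    genProb (Fin (Nat.card G).primeFactorsList.length → Multiplicative (ZMod 2)) k ≤
      genProb G k :=
  genProb_ge_elementary_abelian_two_general G k
end

section
/- Let G be a finite nilpotent group with rank(G) = r, and let k be a natural number with k ≥ r. Then φ_k(G) ≥ ∏_{p | |G|} ∏_{j=0}^{r−1} (1 − p^{j−k}), the outer product ranging over the distinct prime divisors p of |G|. -/
/-!
A maximal subgroup of a nilpotent group `G` is normal of prime index. Hence a tuple generates a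
finite nilpotent group `G` if and only if, for every prime `p ∣ |G|`, its image spans the
`p`-elementary abelian quotient of `G`, a vector space over `ZMod p` of some dimension
`d p ≤ rank G`. These quotients have pairwise coprime orders, so `G` maps onto their product and
the conditions for different `p` are independent. By transposition, `k` random vectors span a
`d`-dimensional space with the same probability as `d` random vectors of `(ZMod p) ^ k` are linearly
independent, which is `∏ j < d, (1 - p ^ (j - k))`.
-/

open Module

/-- The probability that a uniformly distributed random element of the finite type `α` lies
in `S`. -/
noncomputable def uniformProb {α : Type*} (S : Set α) : ℝ :=
  Nat.card S / Nat.card α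

theorem uniformProb_preimage_equiv {α β : Type*} (e : α ≃ β) (S : Set β) :
    uniformProb (e ⁻¹' S) = uniformProb S := by
  rw [uniformProb, uniformProb, Nat.card_congr e,
    Nat.card_preimage_of_injective e.injective (by simp)]

theorem uniformProb_preimage_of_surjective {A B : Type*} [Group A] [Finite A] [Group B]
    (f : A →* B) (hf : Function.Surjective f) (S : Set B) :
    uniformProb (f ⁻¹' S) = uniformProb S := by
  let e : A ⧸ f.ker ≃ B := (QuotientGroup.quotientKerEquivOfSurjective f hf).toEquiv
  have hcard : Nat.card (f ⁻¹' S) = Nat.card f.ker * Nat.card (e ⁻¹' S) :=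
    QuotientGroup.card_preimage_mk f.ker (e ⁻¹' S)
  have hker : (Nat.card f.ker : ℝ) ≠ 0 := Nat.cast_ne_zero.2 Nat.card_pos.ne'
  rw [← uniformProb_preimage_equiv e S, uniformProb, uniformProb, hcard,
    f.ker.card_eq_card_quotient_mul_card_subgroup, mul_comm (Nat.card (A ⧸ f.ker)),
    Nat.cast_mul, Nat.cast_mul, mul_div_mul_left _ _ hker]

theorem uniformProb_univ_pi {ι : Type*} [Fintype ι] {α : ι → Type*} (S : ∀ i, Set (α i)) :
    uniformProb (Set.univ.pi S) = ∏ i, uniformProb (S i) := by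
  simp only [uniformProb, Nat.card_congr (Equiv.Set.univPi S), Nat.card_pi, Nat.cast_prod,
    Finset.prod_div_distrib]

theorem genProb_eq_uniformProb (G : Type*) [Group G] (k : ℕ) :
    genProb G k = uniformProb {v : Fin k → G | Subgroup.closure (Set.range v) = ⊤} := by
  rw [genProb, uniformProb, Nat.card_fun, Nat.card_fin, Nat.cast_pow, Set.coe_ofPred]

section FiniteField

variable {K W : Type*} [Field K] [AddCommGroup W] [Module K W]

theorem span_col_eq_top_iff_linearIndependent_row {m n : Type*} [Finite m] [Finite n]
    (A : Matrix m n K) :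
    Submodule.span K (Set.range A.col) = ⊤ ↔ LinearIndependent K A.row := by
  have := Fintype.ofFinite m
  have := Fintype.ofFinite n
  rw [linearIndependent_iff_card_eq_finrank_span, Set.finrank, ← A.rank_eq_finrank_span_row,
    A.rank_eq_finrank_span_cols, ← finrank_fintype_fun_eq_card K]
  exact ⟨fun h => by rw [h, finrank_top], fun h => Submodule.eq_top_of_finrank_eq h.symm⟩

theorem span_range_eq_top_iff_linearIndependent_coord {ι κ : Type*} [Finite ι] [Finite κ]
    (b : Basis ι K W) (w : κ → W) :
    Submodule.span K (Set.range w) = ⊤ ↔ LinearIndependent K fun i j => b.repr (w j) i := by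
  rw [← Submodule.map_eq_top_iff (e := b.equivFun), Submodule.map_span, LinearEquiv.coe_coe,
    ← Set.range_comp]
  exact span_col_eq_top_iff_linearIndependent_row (Matrix.of fun i j => b.repr (w j) i)

variable [Finite K] [Finite W]

theorem uniformProb_linearIndependent (d : ℕ) :
    uniformProb {w : Fin d → W | LinearIndependent K w} =
      ∏ j ∈ Finset.range d, (1 - (Nat.card K : ℝ) ^ ((j : ℤ) - (finrank K W : ℤ))) := by
  have := Fintype.ofFinite K
  set q := Nat.card K
  set n := finrank K W
  rcases lt_or_ge n d with hnd | hdn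
  · have hempty : {w : Fin d → W | LinearIndependent K w} = ∅ :=
      Set.eq_empty_of_forall_notMem fun w hw =>
        hnd.not_ge (by simpa using LinearIndependent.fintype_card_le_finrank hw)
    rw [hempty, Finset.prod_eq_zero (Finset.mem_range.2 hnd) (by simp)]
    simp [uniformProb]
  have hq : (q : ℝ) ≠ 0 := Nat.cast_ne_zero.2 Nat.card_pos.ne'
  have hcard : Nat.card {w : Fin d → W | LinearIndependent K w} =
      ∏ j ∈ Finset.range d, (q ^ n - q ^ j) := by
    rw [← Fin.prod_univ_eq_prod_range (fun j => q ^ n - q ^ j), Set.coe_ofPred,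
      card_linearIndependent hdn, ← Nat.card_eq_fintype_card]
  have htotal : (Nat.card (Fin d → W) : ℝ) = ∏ _j ∈ Finset.range d, (q : ℝ) ^ n := by
    rw [Nat.card_fun, Nat.card_fin, natCard_eq_pow_finrank (K := K), Finset.prod_const,
      Finset.card_range, Nat.cast_pow, Nat.cast_pow]
  rw [uniformProb, hcard, htotal, Nat.cast_prod, ← Finset.prod_div_distrib]
  refine Finset.prod_congr rfl fun j hj => ?_
  have hjn : j ≤ n := (Finset.mem_range.1 hj).le.trans hdn
  rw [Nat.cast_sub (Nat.pow_le_pow_right Nat.card_pos hjn), Nat.cast_pow, Nat.cast_pow,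
    sub_div, div_self (pow_ne_zero n hq), zpow_sub₀ hq, zpow_natCast, zpow_natCast]

theorem uniformProb_span_eq_top (k : ℕ) :
    uniformProb {w : Fin k → W | Submodule.span K (Set.range w) = ⊤} =
      ∏ j ∈ Finset.range (finrank K W), (1 - (Nat.card K : ℝ) ^ ((j : ℤ) - (k : ℤ))) := by
  let b := finBasis K W
  let transpose : (Fin k → W) ≃ (Fin (finrank K W) → Fin k → K) :=
    (Equiv.piCongrRight fun _ => b.equivFun.toEquiv).trans (Equiv.piComm _)
  have hpre : {w : Fin k → W | Submodule.span K (Set.range w) = ⊤} =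
      transpose ⁻¹' {u | LinearIndependent K u} :=
    Set.ext (span_range_eq_top_iff_linearIndependent_coord b)
  rw [hpre, uniformProb_preimage_equiv, uniformProb_linearIndependent, finrank_fin_fun]

end FiniteField

theorem prod_one_sub_zpow_nonneg {x : ℝ} (hx : 1 ≤ x) (k n : ℕ) :
    0 ≤ ∏ j ∈ Finset.range n, (1 - x ^ ((j : ℤ) - (k : ℤ))) := by
  rcases lt_or_ge k n with hkn | hnk
  · rw [Finset.prod_eq_zero (Finset.mem_range.2 hkn) (by simp)]
  · refine Finset.prod_nonneg fun j hj => sub_nonneg.2 (zpow_le_one_of_nonpos₀ hx ?_)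
    have := Finset.mem_range.1 hj
    omega

theorem antitone_prod_one_sub_zpow {x : ℝ} (hx : 1 ≤ x) (k : ℕ) :
    Antitone fun n => ∏ j ∈ Finset.range n, (1 - x ^ ((j : ℤ) - (k : ℤ))) := by
  refine antitone_nat_of_succ_le fun n => ?_
  rw [Finset.prod_range_succ]
  exact mul_le_of_le_one_right (prod_one_sub_zpow_nonneg hx k n) (sub_le_self _ (by positivity))

/-- The largest quotient of `G` that is abelian of exponent dividing `p`, that is
`G / [G, G] G ^ p`, written additively so that it is a module over `ZMod p`. For `p` prime it is
the `p`-part of the Frattini quotient of a finite nilpotent group. -/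
abbrev AbelianizationMod (G : Type*) [Group G] (p : ℕ) : Type _ :=
  ModN (Additive (Abelianization G)) p

namespace AbelianizationMod

variable (G : Type*) [Group G] (p : ℕ)

/-- The quotient map from `G` to its largest abelian quotient of exponent dividing `p`. -/
def mk : G →* Multiplicative (AbelianizationMod G p) :=
  (AddMonoidHom.toMultiplicativeRight (ModN.mkQ p)).comp Abelianization.of

theorem mk_surjective : Function.Surjective (mk G p) :=
  (Submodule.mkQ_surjective _).comp (QuotientGroup.mk'_surjective _)

instance [Finite G] : Finite (AbelianizationMod G p) :=
  Finite.of_surjective (β := Multiplicative (AbelianizationMod G p)) _ (mk_surjective G p)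

variable {G p}

theorem exists_linearMap_comp_mk {H : Type*} [AddCommGroup H] [Module (ZMod p) H]
    (f : G →* Multiplicative H) :
    ∃ F : AbelianizationMod G p →ₗ[ZMod p] H, ∀ g, F (mk G p g).toAdd = (f g).toAdd :=
  let f' : Additive (Abelianization G) →+ H := MonoidHom.toAdditiveLeft (Abelianization.lift f)
  ⟨ModN.liftEquiv'.symm ⟨f', fun _ => ZModModule.char_nsmul_eq_zero p _⟩, fun _ => rfl⟩

theorem span_range_mk_eq_top {ι : Type*} {v : ι → G}
    (hv : Subgroup.closure (Set.range v) = ⊤) :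
    Submodule.span (ZMod p) (Set.range fun i => (mk G p (v i)).toAdd) = ⊤ := by
  set W := Submodule.span (ZMod p) (Set.range fun i => (mk G p (v i)).toAdd)
  have hle : Subgroup.closure (Set.range v) ≤
      (AddSubgroup.toSubgroup W.toAddSubgroup).comap (mk G p) :=
    (Subgroup.closure_le _).2 (Set.range_subset_iff.2 fun i => Submodule.subset_span ⟨i, rfl⟩)
  refine Submodule.eq_top_iff'.2 fun x => ?_
  obtain ⟨g, rfl⟩ := mk_surjective G p x
  exact hle (hv ▸ Subgroup.mem_top g)

theorem finrank_le_rank (G : Type*) [Group G] [Group.FG G] (p : ℕ) [Fact p.Prime] :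
    finrank (ZMod p) (AbelianizationMod G p) ≤ Group.rank G := by
  obtain ⟨S, hcard, hS⟩ := Group.rank_spec G
  have hspan := span_range_mk_eq_top (p := p) (v := ((↑) : S → G)) (by simpa using hS)
  simpa [hcard] using finrank_le_of_span_eq_top hspan

end AbelianizationMod

section Generation

variable {G : Type*} [Group G]

theorem isSimpleGroup_quotient_of_isCoatom {M : Subgroup G} [M.Normal] (hM : IsCoatom M) :
    IsSimpleGroup (G ⧸ M) := by
  let e : Subgroup (G ⧸ M) ≃o Set.Ici M := QuotientGroup.comapMk'OrderIso M
  have : IsSimpleOrder (Subgroup (G ⧸ M)) :=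
    e.isSimpleOrder_iff.2 (Set.isSimpleOrder_Ici_iff_isCoatom.2 hM)
  have : Nontrivial (G ⧸ M) := QuotientGroup.nontrivial_iff.2 hM.1
  exact ⟨fun H _ => eq_bot_or_eq_top H⟩

variable [Finite G] [Group.IsNilpotent G]

theorem exists_prime_monoidHom_of_closure_ne_top {s : Set G} (hs : Subgroup.closure s ≠ ⊤) :
    ∃ p ∈ (Nat.card G).primeFactors, ∃ f : G →* Multiplicative (ZMod p),
      f ≠ 1 ∧ ∀ g ∈ s, f g = 1 := by
  obtain ⟨M, hM, hsM⟩ := (eq_top_or_exists_le_coatom (Subgroup.closure s)).resolve_left hs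
  have : M.Normal :=
    Subgroup.NormalizerCondition.normal_of_coatom M Group.normalizerCondition_of_isNilpotent hM
  have := isSimpleGroup_quotient_of_isCoatom hM
  obtain ⟨p, hp, ⟨e⟩⟩ := exists_prime_addEquiv_ZMod (G := G ⧸ M)
  let f : G →* Multiplicative (ZMod p) :=
    (AddMonoidHom.toMultiplicativeRight e.toAddMonoidHom).comp (QuotientGroup.mk' M)
  have hf (g : G) : f g = 1 ↔ g ∈ M :=
    (map_eq_zero_iff e e.injective).trans (QuotientGroup.eq_one_iff g)
  have hcard : Nat.card (G ⧸ M) = p := by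
    simpa using Nat.card_congr (Additive.ofMul.trans e.toEquiv)
  refine ⟨p, Nat.mem_primeFactors.2 ⟨hp, hcard ▸ M.card_quotient_dvd_card, Nat.card_pos.ne'⟩, f,
    fun h => hM.1 ?_, fun g hg => (hf g).2 (hsM (Subgroup.subset_closure hg))⟩
  exact (Subgroup.eq_top_iff' M).2 fun g => (hf g).1 (DFunLike.congr_fun h g)

theorem closure_range_eq_top_iff_forall_span_eq_top {ι : Type*} {v : ι → G} :
    Subgroup.closure (Set.range v) = ⊤ ↔ ∀ p ∈ (Nat.card G).primeFactors,
      Submodule.span (ZMod p) (Set.range fun i => (AbelianizationMod.mk G p (v i)).toAdd) = ⊤ := by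
  refine ⟨fun hv p _ => AbelianizationMod.span_range_mk_eq_top hv, fun hspan => ?_⟩
  by_contra hv
  obtain ⟨p, hp, f, hf, hfv⟩ := exists_prime_monoidHom_of_closure_ne_top hv
  obtain ⟨F, hF⟩ := AbelianizationMod.exists_linearMap_comp_mk (p := p) f
  have hF0 : F = 0 := LinearMap.ext_on_range (hspan p hp) fun i => by
    rw [hF, hfv (v i) ⟨i, rfl⟩, toAdd_one, LinearMap.zero_apply]
  refine hf (MonoidHom.ext fun g => ?_)
  rw [← ofAdd_toAdd (f g), ← hF, hF0, LinearMap.zero_apply, ofAdd_zero, MonoidHom.one_apply]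

end Generation

theorem pi_surjective_of_pairwise_coprime {A ι : Type*} [Group A] [Finite ι]
    {B : ι → Type*} [∀ i, Group (B i)] [∀ i, Finite (B i)] {f : ∀ i, A →* B i}
    (hf : ∀ i, Function.Surjective (f i))
    (hcoprime : Pairwise fun i j => (Nat.card (B i)).Coprime (Nat.card (B j))) :
    Function.Surjective (MonoidHom.pi f) := by
  have := Fintype.ofFinite ι
  have hdvd : Nat.card (∀ i, B i) ∣ Nat.card (MonoidHom.pi f).range := by
    rw [Nat.card_pi]
    refine Fintype.prod_dvd_of_isRelPrime
      (fun i j hij => Nat.coprime_iff_isRelPrime.1 (hcoprime hij)) fun i => ?_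
    refine Subgroup.card_dvd_of_surjective
      ((Pi.evalMonoidHom B i).comp (MonoidHom.pi f).range.subtype) fun y => ?_
    obtain ⟨a, rfl⟩ := hf i y
    exact ⟨⟨_, a, rfl⟩, rfl⟩
  exact MonoidHom.range_eq_top.1
    (Subgroup.eq_top_of_le_card _ (Nat.le_of_dvd Nat.card_pos hdvd))

section Nilpotent

variable (G : Type*) [Group G] (k : ℕ)

/-- The map sending a `k`-tuple in `G` to its images in the `p`-elementary abelian quotients of `G`,
for all primes `p` dividing `|G|`. -/
def tupleToAbelianizationMod :
    (Fin k → G) →*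
      ∀ p : (Nat.card G).primeFactors, Fin k → Multiplicative (AbelianizationMod G p) :=
  MonoidHom.pi fun p => (AbelianizationMod.mk G p).compLeft (Fin k)

variable [Finite G]

theorem tupleToAbelianizationMod_surjective :
    Function.Surjective (tupleToAbelianizationMod G k) := by
  have hcard (p : (Nat.card G).primeFactors) :
      ∃ n, Nat.card (Fin k → Multiplicative (AbelianizationMod G p)) = (p : ℕ) ^ n := by
    have : Fact (p : ℕ).Prime := ⟨Nat.prime_of_mem_primeFactors p.2⟩
    refine ⟨finrank (ZMod p) (AbelianizationMod G p) * k, ?_⟩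
    rw [Nat.card_fun, Nat.card_fin, Nat.card_congr Multiplicative.toAdd,
      natCard_eq_pow_finrank (K := ZMod p), Nat.card_zmod, pow_mul]
  refine pi_surjective_of_pairwise_coprime
    (fun p => (AbelianizationMod.mk_surjective G p).comp_left) fun p q hpq => ?_
  obtain ⟨m, hm⟩ := hcard p
  obtain ⟨n, hn⟩ := hcard q
  rw [hm, hn]
  exact Nat.coprime_pow_primes m n (Nat.prime_of_mem_primeFactors p.2)
    (Nat.prime_of_mem_primeFactors q.2) (Subtype.coe_ne_coe.2 hpq)

theorem genProb_eq_prod_of_isNilpotent [Group.IsNilpotent G] :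
    genProb G k = ∏ p ∈ (Nat.card G).primeFactors,
      ∏ j ∈ Finset.range (finrank (ZMod p) (AbelianizationMod G p)),
        (1 - (p : ℝ) ^ ((j : ℤ) - (k : ℤ))) := by
  let spanning (p : ℕ) : Set (Fin k → Multiplicative (AbelianizationMod G p)) :=
    {w | Submodule.span (ZMod p) (Set.range fun j => (w j).toAdd) = ⊤}
  have hgen : {v : Fin k → G | Subgroup.closure (Set.range v) = ⊤} =
      tupleToAbelianizationMod G k ⁻¹'
        Set.univ.pi fun p : (Nat.card G).primeFactors => spanning p := by
    ext v
    rw [Set.mem_preimage, Set.mem_univ_pi, Subtype.forall]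
    exact closure_range_eq_top_iff_forall_span_eq_top
  calc genProb G k = ∏ p : (Nat.card G).primeFactors, uniformProb (spanning p) := by
        rw [genProb_eq_uniformProb, hgen,
          uniformProb_preimage_of_surjective _ (tupleToAbelianizationMod_surjective G k),
          uniformProb_univ_pi]
    _ = ∏ p ∈ (Nat.card G).primeFactors, uniformProb (spanning p) :=
        Finset.prod_coe_sort _ fun p => uniformProb (spanning p)
    _ = _ := Finset.prod_congr rfl fun p hp => by
        have : Fact p.Prime := ⟨Nat.prime_of_mem_primeFactors hp⟩
        have hspan := uniformProb_span_eq_top (K := ZMod p) (W := AbelianizationMod G p) k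
        rwa [Nat.card_zmod] at hspan

theorem genProb_nilpotent_prod_lower_bound_general [Group.IsNilpotent G] {r : ℕ}
    (hr : Group.rank G ≤ r) :
    (∏ p ∈ (Nat.card G).primeFactors, ∏ j ∈ Finset.range r,
        (1 - (p : ℝ) ^ ((j : ℤ) - (k : ℤ)))) ≤ genProb G k := by
  have hp_one {p : ℕ} (hp : p ∈ (Nat.card G).primeFactors) : (1 : ℝ) ≤ p :=
    Nat.one_le_cast.2 (Nat.prime_of_mem_primeFactors hp).one_le
  rw [genProb_eq_prod_of_isNilpotent]
  refine Finset.prod_le_prod (fun p hp => prod_one_sub_zpow_nonneg (hp_one hp) k r) fun p hp => ?_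
  have : Fact p.Prime := ⟨Nat.prime_of_mem_primeFactors hp⟩
  exact antitone_prod_one_sub_zpow (hp_one hp) k ((AbelianizationMod.finrank_le_rank G p).trans hr)

end Nilpotent

theorem genProb_nilpotent_prod_lower_bound (G : Type*) [Group G] [Finite G]
    [Group.IsNilpotent G] (r : ℕ) (hr : Group.rank G = r) (k : ℕ) (hk : r ≤ k) :
    (∏ p ∈ (Nat.card G).primeFactors, ∏ j ∈ Finset.range r,
        (1 - (p : ℝ) ^ ((j : ℤ) - (k : ℤ)))) ≤ genProb G k :=
  genProb_nilpotent_prod_lower_bound_general G k hr.le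
end
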